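/- arXiv:1611.04546 — 5 statements merged into one kernel-verified Lean document; each statement's English description precedes it below -/
import Mathlib

section
/- The largest induced forest of the 3-dimensional hypercube graph Q₃ has order exactly 5: there exists a set of 5 vertices of Q₃ that induces an acyclic subgraph, and every set of vertices of Q₃ that induces an acyclic subgraph has at most 5 elements. -/
/-- The 3-dimensional hypercube graph `Q₃`: vertices are functions `Fin 3 → Bool`,
adjacent iff they differ in exactly one coordinate. -/
def cubeGraph : SimpleGraph (Fin 3 → Bool) where
  Adj x y := ∃! i, x i ≠ y i
  symm := by
    constructor
    rintro x y ⟨i, hi, hu⟩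
    exact ⟨i, hi.symm, fun j hj => hu j hj.symm⟩
  loopless := by
    constructor
    rintro x ⟨i, hi, -⟩
    exact hi rfl

/-!
Deleting the vertices outside a nonempty induced forest `S` destroys at most `∑ v ∉ S, deg v` edges
and leaves at most `#S - 1` of them. In a `d`-regular graph on `n` vertices this reads
`d * n / 2 < #S + d * (n - #S)`, which for `Q₃` is `12 < #S + 3 * (8 - #S)`, so `#S ≤ 5`.
Equality is attained by a claw together with the antipode of its centre.
-/

section InducedForest

open Finset SimpleGraph

variable {V : Type*} {G : SimpleGraph V}

lemma card_edgeFinset_lt_card_of_isAcyclic [Fintype V] [Nonempty V] [Fintype G.edgeSet]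
    (hG : G.IsAcyclic) : #G.edgeFinset < Fintype.card V := by
  classical
  obtain ⟨T, hGT, -, hT⟩ := connected_top.exists_isTree_le_of_le_of_isAcyclic le_top hG
  calc #G.edgeFinset ≤ #T.edgeFinset := card_le_card (edgeFinset_mono hGT)
    _ < Fintype.card V := by rw [← hT.card_edgeFinset]; exact Nat.lt_succ_self _

lemma isAcyclic_induce_of_forall_adj_eq_or_eq {s : Set V} (c : V)
    (h : ∀ x ∈ s, ∀ y ∈ s, G.Adj x y → x = c ∨ y = c) : (G.induce s).IsAcyclic :=
  ((isAcyclic_starGraph c).induce s).anti fun x y hxy ↦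
    show (starGraph c).Adj x y from starGraph_adj.mpr ⟨G.ne_of_adj hxy, h x x.2 y y.2 hxy⟩

variable [Fintype V] [DecidableRel G.Adj] (S : Finset V)

lemma card_edgeFinset_le_card_edgeFinset_induce_add_sum_degree [DecidableEq V] :
    #G.edgeFinset ≤ #(G.induce (S : Set V)).edgeFinset + ∑ v ∈ Sᶜ, G.degree v := by
  have edge_meets_compl :
      G.edgeFinset.filter (¬ ·.toFinset ⊆ S) ⊆ Sᶜ.biUnion (G.incidenceFinset ·) := by
    intro e he
    obtain ⟨heG, heS⟩ := mem_filter.mp he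
    obtain ⟨v, hve, hvS⟩ := not_subset.mp heS
    exact mem_biUnion.mpr ⟨v, mem_compl.mpr hvS, (G.mem_incidenceFinset v e).mpr
      ⟨mem_edgeFinset.mp heG, Sym2.mem_toFinset.mp hve⟩⟩
  calc #G.edgeFinset
      = #(G.edgeFinset.filter (·.toFinset ⊆ S)) + #(G.edgeFinset.filter (¬ ·.toFinset ⊆ S)) :=
        (card_filter_add_card_filter_not _).symm
    _ ≤ #(G.induce (S : Set V)).edgeFinset + #(Sᶜ.biUnion (G.incidenceFinset ·)) := by
        rw [G.card_filter_edgeFinset_toFinset_subset S]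
        gcongr
    _ ≤ #(G.induce (S : Set V)).edgeFinset + ∑ v ∈ Sᶜ, G.degree v := by
        gcongr
        simpa only [card_incidenceFinset_eq_degree] using
          card_biUnion_le (s := Sᶜ) (t := (G.incidenceFinset ·))

variable {S}

lemma card_edgeFinset_lt_of_isAcyclic_induce [DecidableEq V] (hS : S.Nonempty)
    (hforest : (G.induce (S : Set V)).IsAcyclic) :
    #G.edgeFinset < #S + ∑ v ∈ Sᶜ, G.degree v := by
  have : Nonempty (S : Set V) := hS.to_subtype
  have forest_edges : #(G.induce (S : Set V)).edgeFinset < #S := by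
    simpa using card_edgeFinset_lt_card_of_isAcyclic hforest
  calc #G.edgeFinset
      ≤ #(G.induce (S : Set V)).edgeFinset + ∑ v ∈ Sᶜ, G.degree v :=
        card_edgeFinset_le_card_edgeFinset_induce_add_sum_degree S
    _ < #S + ∑ v ∈ Sᶜ, G.degree v := by gcongr

lemma two_mul_mul_card_lt_of_isAcyclic_induce {d : ℕ} (hG : G.IsRegularOfDegree d)
    (hS : S.Nonempty) (hforest : (G.induce (S : Set V)).IsAcyclic) :
    2 * d * #S < d * Fintype.card V + 2 * #S := by
  classical
  have handshake : Fintype.card V * d = 2 * #G.edgeFinset := by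
    simpa [hG.degree_eq] using G.sum_degrees_eq_twice_card_edges
  have edges_lt : #G.edgeFinset < #S + #Sᶜ * d := by
    simpa [hG.degree_eq] using card_edgeFinset_lt_of_isAcyclic_induce hS hforest
  have card_split : #S + #Sᶜ = Fintype.card V := card_add_card_compl S
  rw [← card_split] at handshake ⊢
  linarith

end InducedForest

namespace cubeGraph

instance : DecidableRel cubeGraph.Adj := fun x y ↦
  inferInstanceAs (Decidable (∃ i, x i ≠ y i ∧ ∀ j, x j ≠ y j → j = i))

lemma isRegularOfDegree_three : cubeGraph.IsRegularOfDegree 3 :=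
  show ∀ x, cubeGraph.degree x = 3 by decide +kernel

/-- The claw centred at the origin together with the antipode of the origin, encoded as the
vertices of weight different from 2. It is the witness that an induced forest of order 5 exists. -/
def clawWithAntipode : Finset (Fin 3 → Bool) :=
  {x | Finset.card {i | x i = true} ≠ 2}

lemma card_clawWithAntipode : clawWithAntipode.card = 5 := by
  decide +kernel

-- Adjacent vertices have consecutive weights, so an edge avoiding weight 2 joins weights 0 and 1.
lemma eq_bot_or_eq_bot_of_adj_of_mem_clawWithAntipode :
    ∀ x ∈ clawWithAntipode, ∀ y ∈ clawWithAntipode, cubeGraph.Adj x y → x = ⊥ ∨ y = ⊥ := by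
  decide +kernel

lemma isAcyclic_induce_clawWithAntipode :
    (cubeGraph.induce (clawWithAntipode : Set (Fin 3 → Bool))).IsAcyclic :=
  isAcyclic_induce_of_forall_adj_eq_or_eq ⊥ eq_bot_or_eq_bot_of_adj_of_mem_clawWithAntipode

end cubeGraph

/-- The largest induced forest of `Q₃` has order exactly 5. -/
theorem cubeGraph_max_induced_forest :
    (∃ S : Finset (Fin 3 → Bool), S.card = 5 ∧
      (cubeGraph.induce (S : Set (Fin 3 → Bool))).IsAcyclic) ∧
    (∀ S : Finset (Fin 3 → Bool),
      (cubeGraph.induce (S : Set (Fin 3 → Bool))).IsAcyclic → S.card ≤ 5) := by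
  refine ⟨⟨cubeGraph.clawWithAntipode, cubeGraph.card_clawWithAntipode,
    cubeGraph.isAcyclic_induce_clawWithAntipode⟩, fun S hforest ↦ ?_⟩
  obtain rfl | hS := S.eq_empty_or_nonempty
  · simp
  · have bound : 2 * 3 * S.card < 3 * Fintype.card (Fin 3 → Bool) + 2 * S.card :=
      two_mul_mul_card_lt_of_isAcyclic_induce cubeGraph.isRegularOfDegree_three hS hforest
    have card_vertices : Fintype.card (Fin 3 → Bool) = 8 := rfl
    lia
end

section
/- For any three pairwise non-adjacent vertices a, b, c of the hypercube graph Q₃, the set consisting of the five vertices of Q₃ other than a, b, c induces an acyclic subgraph of Q₃. -/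
/-!
Along an edge of the cube the parity of the Hamming distance to a fixed vertex `a` changes, so the
vertices at even distance from `a` form a vertex cover. Three binary strings differ pairwise in
`2 * m` positions in total, where `m` is the number of positions at which they are not all equal;
hence three pairwise non-adjacent vertices of `Q₃`, having distances at least `2` with sum at most
`6`, are at distance exactly `2` from each other. Thus `b` and `c` are two of the three vertices
at distance `2` from `a`. Deleting `a`, `b`, `c` leaves a vertex cover of at most one vertex, and
a graph all of whose edges share a vertex is acyclic.
-/

open Finset SimpleGraph

section Acyclic

variable {V : Type*} {G : SimpleGraph V} {s : Set V}

theorem isAcyclic_of_isVertexCover_of_subsingleton (hG : G.IsVertexCover s)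
    (hs : s.Subsingleton) : G.IsAcyclic := by
  obtain rfl | ⟨r, rfl⟩ := hs.eq_empty_or_singleton
  · rw [isVertexCover_empty.mp hG]
    exact isAcyclic_bot
  · have le_star : G ≤ starGraph r := fun _ _ h ↦ starGraph_adj.mpr ⟨h.ne, hG h⟩
    exact (isAcyclic_starGraph r).anti le_star

end Acyclic

section BooleanCube

variable {ι : Type*} [Fintype ι] (x y z : ι → Bool)

theorem hammingDist_add_hammingDist_add_hammingDist :
    hammingDist x y + hammingDist y z + hammingDist x z =
      2 * #{i | ¬(x i = y i ∧ y i = z i)} := by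
  simp only [hammingDist, card_filter, mul_sum, ← sum_add_distrib]
  refine sum_congr rfl fun i _ ↦ ?_
  cases x i <;> cases y i <;> cases z i <;> rfl

theorem hammingDist_add_hammingDist_add_hammingDist_le :
    hammingDist x y + hammingDist y z + hammingDist x z ≤ 2 * Fintype.card ι := by
  rw [hammingDist_add_hammingDist_add_hammingDist]
  exact Nat.mul_le_mul_left 2 (card_le_univ _)

theorem even_hammingDist_add_hammingDist_add_hammingDist :
    Even (hammingDist x y + hammingDist y z + hammingDist x z) := by
  rw [hammingDist_add_hammingDist_add_hammingDist]
  exact even_two_mul _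

theorem card_filter_hammingDist_eq [DecidableEq ι] (k : ℕ) :
    #{y | hammingDist x y = k} = (Fintype.card ι).choose k := by
  have ne_xor_iff (p q : Bool) : ¬p = (p ^^ q) ↔ q = true := by cases p <;> cases q <;> decide
  rw [← card_univ, ← card_powersetCard]
  refine card_nbij' (fun y ↦ ({i | x i ≠ y i} : Finset ι)) (fun s i ↦ x i ^^ decide (i ∈ s))
    ?_ ?_ ?_ ?_
  · intro y hy
    simpa [hammingDist] using hy
  · intro s hs
    simpa [hammingDist, ne_xor_iff] using hs
  · intro y _
    funext i
    cases hx : x i <;> cases hy : y i <;> simp [hx, hy]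
  · intro s _
    ext i
    simp [ne_xor_iff]

end BooleanCube

section CubeGraph

variable {a b c : Fin 3 → Bool}

theorem cubeGraph_adj_iff_hammingDist_eq_one : cubeGraph.Adj a b ↔ hammingDist a b = 1 := by
  rw [hammingDist, card_eq_one_iff_existsUnique]
  simp [cubeGraph]

theorem two_le_hammingDist_of_not_adj (hne : a ≠ b) (hadj : ¬cubeGraph.Adj a b) :
    2 ≤ hammingDist a b := by
  have := hammingDist_pos.mpr hne
  have := mt cubeGraph_adj_iff_hammingDist_eq_one.mpr hadj
  lia

theorem isVertexCover_even_hammingDist (a : Fin 3 → Bool) :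
    cubeGraph.IsVertexCover {x | Even (hammingDist a x)} := by
  intro x y hxy
  have parity := even_hammingDist_add_hammingDist_add_hammingDist a x y
  rw [cubeGraph_adj_iff_hammingDist_eq_one.mp hxy] at parity
  change Even (hammingDist a x) ∨ Even (hammingDist a y)
  grind

theorem hammingDist_eq_two_of_even (hne : a ≠ b) (heven : Even (hammingDist a b)) :
    hammingDist a b = 2 := by
  have pos : 0 < hammingDist a b := hammingDist_pos.mpr hne
  have le_three : hammingDist a b ≤ 3 := hammingDist_le_card_fintype
  grind

theorem subsingleton_even_hammingDist_diff (hab : hammingDist a b = 2)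
    (hac : hammingDist a c = 2) (hbc : b ≠ c) :
    ({x | Even (hammingDist a x)} \ {a, b, c}).Subsingleton := by
  let sphere : Finset (Fin 3 → Bool) := {x | hammingDist a x = 2}
  have card_sphere : #sphere = 3 := card_filter_hammingDist_eq a 2
  have card_rest : #(sphere \ {b, c}) = 1 := by
    have hsub : {b, c} ⊆ sphere := by simp [sphere, insert_subset_iff, hab, hac]
    rw [card_sdiff_of_subset hsub, card_sphere, card_pair hbc]
  refine (card_le_one_iff_subsingleton.mp card_rest.le).anti ?_
  rintro x ⟨heven, hx⟩
  simp only [Set.mem_insert_iff, Set.mem_singleton_iff, not_or] at hx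
  have hax : hammingDist a x = 2 := hammingDist_eq_two_of_even (Ne.symm hx.1) heven
  simp [sphere, hax, hx.2]

end CubeGraph

/-- For any three pairwise non-adjacent vertices `a, b, c` of `Q₃`, the five remaining
vertices induce an acyclic subgraph of `Q₃`. -/
theorem cubeGraph_remove_three_nonadjacent_acyclic (a b c : Fin 3 → Bool)
    (hab : a ≠ b) (hac : a ≠ c) (hbc : b ≠ c)
    (nab : ¬ cubeGraph.Adj a b) (nac : ¬ cubeGraph.Adj a c) (nbc : ¬ cubeGraph.Adj b c) :
    (cubeGraph.induce {x | x ≠ a ∧ x ≠ b ∧ x ≠ c}).IsAcyclic := by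
  have hab₂ := two_le_hammingDist_of_not_adj hab nab
  have hac₂ := two_le_hammingDist_of_not_adj hac nac
  have hbc₂ := two_le_hammingDist_of_not_adj hbc nbc
  have sum_le : hammingDist a b + hammingDist b c + hammingDist a c ≤ 2 * 3 :=
    hammingDist_add_hammingDist_add_hammingDist_le a b c
  have rest_subsingleton := subsingleton_even_hammingDist_diff
    (show hammingDist a b = 2 by lia) (show hammingDist a c = 2 by lia) hbc
  refine isAcyclic_of_isVertexCover_of_subsingleton
    ((isVertexCover_even_hammingDist a).preimage (Embedding.induce _)) ?_
  rintro ⟨x, hx⟩ hx_even ⟨y, hy⟩ hy_even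
  exact Subtype.ext <| rest_subsingleton ⟨hx_even, by simpa using hx⟩ ⟨hy_even, by simpa using hy⟩
end

section
/- The largest induced forest of T₆ has order exactly 4: there exists a set of 4 vertices of T₆ that induces an acyclic subgraph, and every set of vertices of T₆ that induces an acyclic subgraph has at most 4 elements. -/
/-- The graph `T₆`: the complete bipartite graph `K_{3,3}` with parts
`{inl 0, inl 1, inl 2}` and `{inr 0, inr 1, inr 2}`, minus the edge `inl 2 — inr 2`. -/
def T6graph : SimpleGraph (Fin 3 ⊕ Fin 3) where
  Adj x y := (∃ i j, x = Sum.inl i ∧ y = Sum.inr j ∧ ¬(i = 2 ∧ j = 2)) ∨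
             (∃ i j, x = Sum.inr j ∧ y = Sum.inl i ∧ ¬(i = 2 ∧ j = 2))
  symm := by
    constructor
    rintro x y (⟨i, j, h1, h2, h3⟩ | ⟨i, j, h1, h2, h3⟩)
    · exact Or.inr ⟨i, j, h2, h1, h3⟩
    · exact Or.inl ⟨i, j, h2, h1, h3⟩
  loopless := by
    constructor
    rintro x (⟨i, j, h1, h2, -⟩ | ⟨i, j, h1, h2, -⟩) <;> simp_all

/-!
In a forest two distinct vertices have at most one common neighbor, as two of them would close a
4-cycle. The vertices `inr 0` and `inr 1` are adjacent to all of the left part, so a forest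
containing the whole right part meets the left part in at most one vertex; the same holds with the
parts exchanged. A forest with at least 5 vertices would contain a whole part and two vertices of
the other. The bound is attained by the star formed by `inl 0` and the whole right part.
-/

section InducedForest

variable {V : Type*} {G : SimpleGraph V} {s : Set V} {v w : V}

theorem subsingleton_commonNeighbors_of_isAcyclic (hG : G.IsAcyclic) (hvw : v ≠ w) :
    (G.commonNeighbors v w).Subsingleton := by
  rintro x ⟨hvx, hwx⟩ y ⟨hvy, hwy⟩
  let pathVia (u : V) (hvu : G.Adj v u) (hwu : G.Adj w u) : G.Path v w :=
    ⟨.cons hvu (.cons hwu.symm .nil), by simp [hvu.ne, hwu.ne', hvw]⟩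
  have hpath : pathVia x hvx hwx = pathVia y hvy hwy := (hG.subsingleton_path v w).elim _ _
  exact congrArg (fun p : G.Path v w => p.1.snd) hpath

theorem subsingleton_inter_commonNeighbors_of_isAcyclic_induce (hs : (G.induce s).IsAcyclic)
    (hv : v ∈ s) (hw : w ∈ s) (hvw : v ≠ w) : (s ∩ G.commonNeighbors v w).Subsingleton := by
  rintro x ⟨hx, hvx, hwx⟩ y ⟨hy, hvy, hwy⟩
  have hne : (⟨v, hv⟩ : s) ≠ ⟨w, hw⟩ := Subtype.coe_ne_coe.mp hvw
  exact congrArg Subtype.val <| subsingleton_commonNeighbors_of_isAcyclic hs hne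
    (x := ⟨x, hx⟩) ⟨hvx, hwx⟩ (y := ⟨y, hy⟩) ⟨hvy, hwy⟩

theorem isAcyclic_induce_insert_of_isIndepSet (c : V) (hs : G.IsIndepSet s) :
    (G.induce (insert c s)).IsAcyclic := by
  let center : ↥(insert c s) := ⟨c, Set.mem_insert c s⟩
  refine (SimpleGraph.isAcyclic_starGraph center).anti fun x y hxy => ?_
  refine SimpleGraph.starGraph_adj.mpr ⟨hxy.ne, ?_⟩
  by_contra! hxyc
  have mem_of_ne_center (z : ↥(insert c s)) (hz : z ≠ center) : z.1 ∈ s :=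
    Set.mem_of_mem_insert_of_ne z.2 (Subtype.coe_ne_coe.mpr hz)
  exact hs (mem_of_ne_center x hxyc.1) (mem_of_ne_center y hxyc.2)
    (Subtype.coe_ne_coe.mpr hxy.ne) hxy

end InducedForest

section T6graph

variable {i j : Fin 3} {S : Finset (Fin 3 ⊕ Fin 3)}

theorem T6graph_adj_inl_inr : T6graph.Adj (.inl i) (.inr j) ↔ ¬(i = 2 ∧ j = 2) := by
  simp [T6graph]

theorem T6graph_isIndepSet_range_inr : T6graph.IsIndepSet (Set.range Sum.inr) := by
  rintro _ ⟨i, rfl⟩ _ ⟨j, rfl⟩ -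
  simp [T6graph]

theorem T6graph_inl_mem_commonNeighbors :
    Sum.inl i ∈ T6graph.commonNeighbors (.inr 0) (.inr 1) := by
  simp [SimpleGraph.mem_commonNeighbors, T6graph.adj_comm (.inr _), T6graph_adj_inl_inr]

theorem T6graph_inr_mem_commonNeighbors :
    Sum.inr j ∈ T6graph.commonNeighbors (.inl 0) (.inl 1) := by
  simp [SimpleGraph.mem_commonNeighbors, T6graph_adj_inl_inr]

theorem T6graph_card_toLeft_le_one (hS : (T6graph.induce (S : Set (Fin 3 ⊕ Fin 3))).IsAcyclic)
    (h₀ : .inr 0 ∈ S) (h₁ : .inr 1 ∈ S) : S.toLeft.card ≤ 1 := by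
  refine Finset.card_le_one.mpr fun i hi j hj => Sum.inl_injective (β := Fin 3) ?_
  exact subsingleton_inter_commonNeighbors_of_isAcyclic_induce hS h₀ h₁ (by decide)
    ⟨Finset.mem_toLeft.mp hi, T6graph_inl_mem_commonNeighbors⟩
    ⟨Finset.mem_toLeft.mp hj, T6graph_inl_mem_commonNeighbors⟩

theorem T6graph_card_toRight_le_one (hS : (T6graph.induce (S : Set (Fin 3 ⊕ Fin 3))).IsAcyclic)
    (h₀ : .inl 0 ∈ S) (h₁ : .inl 1 ∈ S) : S.toRight.card ≤ 1 := by
  refine Finset.card_le_one.mpr fun i hi j hj => Sum.inr_injective (α := Fin 3) ?_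
  exact subsingleton_inter_commonNeighbors_of_isAcyclic_induce hS h₀ h₁ (by decide)
    ⟨Finset.mem_toRight.mp hi, T6graph_inr_mem_commonNeighbors⟩
    ⟨Finset.mem_toRight.mp hj, T6graph_inr_mem_commonNeighbors⟩

theorem T6graph_card_le_four_of_isAcyclic_induce
    (hS : (T6graph.induce (S : Set (Fin 3 ⊕ Fin 3))).IsAcyclic) : S.card ≤ 4 := by
  have hcard : S.toLeft.card + S.toRight.card = S.card := Finset.card_toLeft_add_card_toRight
  have hleft : S.toLeft.card ≤ 3 := card_finset_fin_le _
  have hright : S.toRight.card ≤ 3 := card_finset_fin_le _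
  by_cases hleft_univ : S.toLeft = Finset.univ
  · have mem_inl (i : Fin 3) : .inl i ∈ S := by simp [← Finset.mem_toLeft, hleft_univ]
    have : S.toRight.card ≤ 1 := T6graph_card_toRight_le_one hS (mem_inl 0) (mem_inl 1)
    lia
  by_cases hright_univ : S.toRight = Finset.univ
  · have mem_inr (j : Fin 3) : .inr j ∈ S := by simp [← Finset.mem_toRight, hright_univ]
    have : S.toLeft.card ≤ 1 := T6graph_card_toLeft_le_one hS (mem_inr 0) (mem_inr 1)
    lia
  have hleft_lt : S.toLeft.card < 3 := (Finset.card_lt_iff_ne_univ _).mpr hleft_univ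
  have hright_lt : S.toRight.card < 3 := (Finset.card_lt_iff_ne_univ _).mpr hright_univ
  lia

end T6graph

/-- The largest induced forest of `T₆` has order exactly 4. -/
theorem T6graph_max_induced_forest :
    (∃ S : Finset (Fin 3 ⊕ Fin 3), S.card = 4 ∧
      (T6graph.induce (S : Set (Fin 3 ⊕ Fin 3))).IsAcyclic) ∧
    (∀ S : Finset (Fin 3 ⊕ Fin 3),
      (T6graph.induce (S : Set (Fin 3 ⊕ Fin 3))).IsAcyclic → S.card ≤ 4) := by
  refine ⟨⟨insert (.inl 0) (Finset.univ.map .inr), by decide, ?_⟩,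
    fun S hS => T6graph_card_le_four_of_isAcyclic_induce hS⟩
  rw [Finset.coe_insert, Finset.coe_map, Finset.coe_univ, Set.image_univ]
  exact isAcyclic_induce_insert_of_isIndepSet (.inl 0) T6graph_isIndepSet_range_inr
end

section
/- Let G be a finite simple graph and let S be a set of vertices of G such that the subgraph of G induced on S is isomorphic to the hypercube graph Q₃ and at most 3 edges of G have exactly one endpoint in S. Then for every set F of vertices of G disjoint from S that induces an acyclic subgraph of G, there exists a 5-element subset S' of S such that F ∪ S' induces an acyclic subgraph of G. -/
/-- The set of edges of `G` with exactly one endpoint in `S`. -/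
def edgeCut {V : Type*} (G : SimpleGraph V) (S : Set V) : Set (Sym2 V) :=
  {e | e ∈ G.edgeSet ∧ ∃ u v, e = s(u, v) ∧ u ∈ S ∧ v ∉ S}

/-!
Choose one endpoint in `S` for each of the at most three edges leaving `S`, except for one of these
edges, and collect the chosen endpoints in a set `T` of size at most `2`. If `S' ⊆ S` avoids `T`,
then at most one edge joins `F` to `S'`; such an edge is a bridge of the graph induced on `F ∪ S'`,
so this graph is acyclic as soon as `S'` induces a forest. It remains to find five vertices of `Q₃`
that avoid two given vertices `a`, `b` and induce a forest: deleting `a` and its antipode leaves a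
hexagon, and deleting one more vertex (`b`, if it is still there) leaves a path.
-/

section Forests

open SimpleGraph Finset

variable {V : Type*} {G : SimpleGraph V} {A B : Set V} {u v : V}

theorem edgeCut_compl (G : SimpleGraph V) (A : Set V) : edgeCut G Aᶜ = edgeCut G A := by
  ext e
  constructor
  · rintro ⟨he, u, v, rfl, hu, hv⟩
    exact ⟨he, v, u, Sym2.eq_swap, not_not.1 hv, hu⟩
  · rintro ⟨he, u, v, rfl, hu, hv⟩
    exact ⟨he, v, u, Sym2.eq_swap, hv, not_not.2 hu⟩

theorem isBridge_of_edgeCut_subsingleton (h : (edgeCut G A).Subsingleton) {e : Sym2 V}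
    (he : e ∈ edgeCut G A) : G.IsBridge e := by
  obtain ⟨-, u, v, rfl, hu, hv⟩ := id he
  refine isBridge_iff_forall_walk_mem_edges.2 fun p => ?_
  obtain ⟨d, hd, hd_fst, hd_snd⟩ := p.exists_boundary_dart A hu hv
  have hd_cut : d.edge ∈ edgeCut G A := ⟨d.edge_mem, d.fst, d.snd, rfl, hd_fst, hd_snd⟩
  exact h hd_cut he ▸ List.mem_map_of_mem hd

theorem mem_of_mem_support_of_edges_notMem_edgeCut {p : G.Walk u v}
    (hp : ∀ e ∈ p.edges, e ∉ edgeCut G A) (hu : u ∈ A) : ∀ x ∈ p.support, x ∈ A := by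
  classical
  intro x hx
  by_contra hxA
  obtain ⟨d, hd, hd_fst, hd_snd⟩ := (p.takeUntil x hx).exists_boundary_dart A hu hxA
  exact hp d.edge (p.edges_takeUntil_subset_edges hx (List.mem_map_of_mem hd))
    ⟨d.edge_mem, d.fst, d.snd, rfl, hd_fst, hd_snd⟩

theorem not_isCycle_of_isAcyclic_induce (hA : (G.induce A).IsAcyclic) {c : G.Walk v v}
    (hc : ∀ x ∈ c.support, x ∈ A) : ¬ c.IsCycle := by
  intro hcycle
  refine hA (c.induce A hc) ?_
  rw [← Walk.isCycle_map_iff_of_injective (f := (Embedding.induce A).toHom)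
    (Embedding.induce (G := G) A).injective, Walk.map_induce]
  exact hcycle

theorem isAcyclic_of_edgeCut_subsingleton (hA : (G.induce A).IsAcyclic)
    (hA' : (G.induce Aᶜ).IsAcyclic) (h : (edgeCut G A).Subsingleton) : G.IsAcyclic := by
  intro v c hc
  have havoid : ∀ e ∈ c.edges, e ∉ edgeCut G A := fun e he hcut =>
    (isBridge_of_edgeCut_subsingleton h hcut).notMem_edges_of_isCycle hc he
  by_cases hv : v ∈ A
  · exact not_isCycle_of_isAcyclic_induce hA
      (mem_of_mem_support_of_edges_notMem_edgeCut havoid hv) hc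
  · rw [← edgeCut_compl] at havoid
    exact not_isCycle_of_isAcyclic_induce hA'
      (mem_of_mem_support_of_edges_notMem_edgeCut havoid hv) hc

theorem isAcyclic_induce_union (hA : (G.induce A).IsAcyclic) (hB : (G.induce B).IsAcyclic)
    (h : {e ∈ edgeCut G A | ∀ v ∈ e, v ∈ A ∪ B}.Subsingleton) :
    (G.induce (A ∪ B)).IsAcyclic := by
  let ι : G.induce (A ∪ B) →g G := (Embedding.induce (A ∪ B)).toHom
  have hι : Function.Injective ι := Subtype.val_injective
  refine isAcyclic_of_edgeCut_subsingleton (A := ι ⁻¹' A)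
    (hA.comap (induceHom ι fun _ hx => hx) (induceHom_injective _ _ hι.injOn))
    (hB.comap (induceHom ι fun x hx => x.2.resolve_left hx) (induceHom_injective _ _ hι.injOn)) ?_
  refine (h.preimage (Sym2.map.injective hι)).anti ?_
  rintro _ ⟨hadj, u, v, rfl, hu, hv⟩
  refine ⟨⟨hadj, u, v, rfl, hu, hv⟩, ?_⟩
  simp only [Sym2.map_mk, Sym2.mem_iff, forall_eq_or_imp, forall_eq]
  exact ⟨u.2, v.2⟩

theorem isAcyclic_induce_image {W : Type*} {H : SimpleGraph W} (f : H ↪g G) {s : Set W}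
    (hs : (H.induce s).IsAcyclic) : (G.induce (f '' s)).IsAcyclic :=
  let e : H.induce s ≃g G.induce (f '' s) :=
    ⟨Equiv.Set.image f s f.injective, f.map_adj_iff⟩
  e.isAcyclic_iff.1 hs

theorem isAcyclic_of_subsingleton_le_neighbors {α : Type*} [LinearOrder α] (r : V → α)
    (h : ∀ v, {w | G.Adj v w ∧ r w ≤ r v}.Subsingleton) : G.IsAcyclic := by
  classical
  intro u c hc
  obtain ⟨v, hv, hmax⟩ := c.support.toFinset.exists_max_image r ⟨u, by simp⟩
  rw [List.mem_toFinset] at hv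
  have hsub : c.toSubgraph.neighborSet v ⊆ {w | G.Adj v w ∧ r w ≤ r v} := fun w hw =>
    ⟨hw.adj_sub, hmax w (List.mem_toFinset.2 (c.mem_verts_toSubgraph.1 hw.snd_mem))⟩
  obtain ⟨x, y, hxy, hpair⟩ := Set.ncard_eq_two.1 (hc.ncard_neighborSet_toSubgraph_eq_two hv)
  rw [hpair, Set.pair_subset_iff] at hsub
  exact hxy (h v hsub.1 hsub.2)

theorem exists_finset_card_le_subsingleton {α β : Type*} (f : α → β) {C : Set α} {n : ℕ}
    (hC : C.encard ≤ n + 1) : ∃ T : Finset β, #T ≤ n ∧ {e ∈ C | f e ∉ T}.Subsingleton := by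
  classical
  have hfin : C.Finite := Set.finite_of_encard_le_coe (k := n + 1) (by exact_mod_cast hC)
  lift C to Finset α using hfin
  rw [Set.encard_coe_eq_coe_finsetCard] at hC
  obtain rfl | ⟨e₀, he₀⟩ := C.eq_empty_or_nonempty
  · exact ⟨∅, by simp, by simp⟩
  refine ⟨(C.erase e₀).image f, card_image_le.trans ?_, ?_⟩
  · rw [card_erase_of_mem he₀, Nat.sub_le_iff_le_add]
    exact_mod_cast hC
  · have heq : ∀ e ∈ C, f e ∉ (C.erase e₀).image f → e = e₀ := fun e he hf =>
      by_contra fun hne => hf (mem_image_of_mem f (mem_erase.2 ⟨hne, he⟩))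
    exact fun e he e' he' => (heq e he.1 he.2).trans (heq e' he'.1 he'.2).symm

theorem exists_finset_card_le_edgeCut_subsingleton {S : Set V} {n : ℕ}
    (h : (edgeCut G S).encard ≤ n + 1) :
    ∃ T : Finset V, #T ≤ n ∧ {e ∈ edgeCut G S | ∀ v ∈ e, v ∈ S → v ∉ T}.Subsingleton := by
  have hend : ∀ e : Sym2 V, ∃ v ∈ e, e ∈ edgeCut G S → v ∈ S := by
    intro e
    by_cases he : e ∈ edgeCut G S
    · obtain ⟨-, u, v, rfl, hu, -⟩ := he
      exact ⟨u, Sym2.mem_mk_left u v, fun _ => hu⟩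
    · exact ⟨e.out.1, e.out_fst_mem, fun he' => absurd he' he⟩
  choose f hfe hfS using hend
  obtain ⟨T, hT, hsub⟩ := exists_finset_card_le_subsingleton f h
  exact ⟨T, hT, hsub.anti fun e he => ⟨he.1, he.2 _ (hfe e) (hfS e he.1)⟩⟩

end Forests

section Cube

open SimpleGraph Finset

theorem cubeGraph_adj_iff_hammingDist {x y : Fin 3 → Bool} :
    cubeGraph.Adj x y ↔ hammingDist x y = 1 := by
  simp only [cubeGraph, hammingDist, card_eq_one_iff_existsUnique, mem_filter_univ]

/-- The hexagon of `Q₃` missing `a` and its antipode `aᶜ`, with `c` removed. For `c ≠ a, aᶜ` it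
consists of the vertices of a path whose middle vertex is `cᶜ`. -/
def hexagonErase (a c : Fin 3 → Bool) : Finset (Fin 3 → Bool) :=
  {a, aᶜ, c}ᶜ

theorem card_hexagonErase {a c : Fin 3 → Bool} (hca : c ≠ a) (hca' : c ≠ aᶜ) :
    #(hexagonErase a c) = 5 := by
  have hthree : #{a, aᶜ, c} = 3 :=
    card_eq_three.2 ⟨a, aᶜ, c, compl_ne_self.symm, hca.symm, hca'.symm, rfl⟩
  rw [hexagonErase, card_compl, hthree]
  simp

theorem exists_notMem_hexagonErase :
    ∀ a b : Fin 3 → Bool, ∃ c, c ≠ a ∧ c ≠ aᶜ ∧ b ∉ hexagonErase a c := by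
  decide +kernel

-- On the path `hexagonErase a c`, only the neighbor in the direction of the middle vertex `cᶜ`
-- is at most as far from `cᶜ`.
theorem card_closer_neighbors_hexagonErase_le_one : ∀ a c : Fin 3 → Bool, c ≠ a → c ≠ aᶜ →
    ∀ v ∈ hexagonErase a c,
      #{w ∈ hexagonErase a c | hammingDist v w = 1 ∧ hammingDist w cᶜ ≤ hammingDist v cᶜ} ≤ 1 := by
  decide +kernel

theorem isAcyclic_induce_hexagonErase {a c : Fin 3 → Bool} (hca : c ≠ a) (hca' : c ≠ aᶜ) :
    (cubeGraph.induce (hexagonErase a c : Set (Fin 3 → Bool))).IsAcyclic := by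
  refine isAcyclic_of_subsingleton_le_neighbors (fun x => hammingDist x.1 cᶜ) ?_
  rintro v u ⟨hvu, hu⟩ w ⟨hvw, hw⟩
  have hcard := card_closer_neighbors_hexagonErase_le_one a c hca hca' v v.2
  have hvu_dist := cubeGraph_adj_iff_hammingDist.1 (induce_adj.1 hvu)
  have hvw_dist := cubeGraph_adj_iff_hammingDist.1 (induce_adj.1 hvw)
  exact Subtype.ext <| card_le_one.1 hcard u (mem_filter.2 ⟨u.2, hvu_dist, hu⟩) w
    (mem_filter.2 ⟨w.2, hvw_dist, hw⟩)

theorem exists_isAcyclic_induce_cubeGraph_disjoint {T : Finset (Fin 3 → Bool)} (hT : #T ≤ 2) :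
    ∃ s : Finset (Fin 3 → Bool), #s = 5 ∧ Disjoint s T ∧
      (cubeGraph.induce (s : Set (Fin 3 → Bool))).IsAcyclic := by
  obtain ⟨P, hTP, -, hP⟩ := exists_subsuperset_card_eq T.subset_univ hT (by simp)
  obtain ⟨a, b, -, rfl⟩ := card_eq_two.1 hP
  obtain ⟨c, hca, hca', hb⟩ := exists_notMem_hexagonErase a b
  have ha : a ∉ hexagonErase a c := by simp [hexagonErase]
  refine ⟨hexagonErase a c, card_hexagonErase hca hca', ?_, isAcyclic_induce_hexagonErase hca hca'⟩
  refine Disjoint.mono_right hTP ?_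
  rw [disjoint_insert_right, disjoint_singleton_right]
  exact ⟨ha, hb⟩

theorem exists_isAcyclic_induce_disjoint_of_iso_cubeGraph {V : Type*} {G : SimpleGraph V}
    {S : Finset V} (φ : G.induce (S : Set V) ≃g cubeGraph) {T : Finset V} (hT : #T ≤ 2) :
    ∃ S' ⊆ S, #S' = 5 ∧ Disjoint S' T ∧ (G.induce (S' : Set V)).IsAcyclic := by
  let ι : cubeGraph ↪g G := (Embedding.induce (S : Set V)).comp φ.symm.toEmbedding
  have hpre : #(T.preimage ι ι.injective.injOn) ≤ 2 :=
    (card_le_card_of_injOn ι (fun _ hx => mem_preimage.1 hx) ι.injective.injOn).trans hT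
  obtain ⟨s, hcard, hdisj, hacyc⟩ := exists_isAcyclic_induce_cubeGraph_disjoint hpre
  refine ⟨s.map ι.toEmbedding, ?_, by rwa [card_map], ?_, ?_⟩
  · exact map_subset_iff_subset_preimage.2 fun x _ => mem_preimage.2 (φ.symm x).2
  · rw [Finset.disjoint_left, forall_mem_map]
    exact fun x hx hxT => Finset.disjoint_left.1 hdisj hx (mem_preimage.2 hxT)
  · rw [coe_map]
    exact isAcyclic_induce_image ι hacyc

end Cube

theorem extend_forest_of_Q3_subgraph_general {V : Type*} (G : SimpleGraph V) (S : Finset V)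
    (hiso : Nonempty ((G.induce (S : Set V)) ≃g cubeGraph))
    (hcut : (edgeCut G (S : Set V)).encard ≤ 3)
    (F : Set V) (hdisj : Disjoint F (S : Set V)) (hF : (G.induce F).IsAcyclic) :
    ∃ S' : Finset V, S' ⊆ S ∧ S'.card = 5 ∧
      (G.induce (F ∪ (S' : Set V))).IsAcyclic := by
  obtain ⟨φ⟩ := hiso
  have hcut' : (edgeCut G (S : Set V)).encard ≤ (2 : ℕ) + 1 := hcut.trans_eq (by norm_num)
  obtain ⟨T, hT, hsub⟩ := exists_finset_card_le_edgeCut_subsingleton hcut'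
  obtain ⟨S', hS', hcard, hST, hacyc⟩ := exists_isAcyclic_induce_disjoint_of_iso_cubeGraph φ hT
  refine ⟨S', hS', hcard, isAcyclic_induce_union hF hacyc (hsub.anti ?_)⟩
  rintro _ ⟨⟨hadj, u, v, rfl, hu, hv⟩, hmem⟩
  have huS : u ∉ S := Set.disjoint_left.1 hdisj hu
  have hvS' : v ∈ S' := (hmem v (Sym2.mem_mk_right u v)).resolve_left hv
  refine ⟨⟨hadj, v, u, Sym2.eq_swap, hS' hvS', huS⟩, ?_⟩
  simp only [Sym2.mem_iff, forall_eq_or_imp, forall_eq]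
  exact ⟨fun h => absurd h huS, fun _ => Finset.disjoint_left.1 hST hvS'⟩

/-- If `S` induces a copy of `Q₃` in `G` with at most 3 edges of `G` leaving `S`, then
any induced forest `F` of `G` disjoint from `S` can be extended by 5 vertices of `S`. -/
theorem extend_forest_of_Q3_subgraph {V : Type*} [Fintype V] (G : SimpleGraph V)
    (S : Finset V)
    (hiso : Nonempty ((G.induce (S : Set V)) ≃g cubeGraph))
    (hcut : (edgeCut G (S : Set V)).ncard ≤ 3)
    (F : Set V) (hdisj : Disjoint F (S : Set V)) (hF : (G.induce F).IsAcyclic) :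
    ∃ S' : Finset V, S' ⊆ S ∧ S'.card = 5 ∧
      (G.induce (F ∪ (S' : Set V))).IsAcyclic := by
  have hencard : (edgeCut G (S : Set V)).encard ≤ 3 := by
    rw [← (Set.toFinite (edgeCut G (S : Set V))).cast_ncard_eq]
    exact_mod_cast hcut
  exact extend_forest_of_Q3_subgraph_general G S hiso hencard F hdisj hF
end

section
/- Let G be a finite simple graph and let S and T be sets of vertices of G such that the subgraph of G induced on S is isomorphic to the hypercube graph Q₃, the subgraph of G induced on T is isomorphic to Q₃, at most 2 edges of G have exactly one endpoint in S, and at most 2 edges of G have exactly one endpoint in T. If S ≠ T, then S and T are disjoint. -/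
section EdgeReachable

open Function

variable {V W : Type*} {G : SimpleGraph V} {H : SimpleGraph W} {k : ℕ} {u v : V}

theorem isEdgeReachable_map (f : G →g H) (hf : Injective f) (h : G.IsEdgeReachable k u v) :
    H.IsEdgeReachable k (f u) (f v) := by
  intro s hs
  have hpre : (Sym2.map f ⁻¹' s).encard < k :=
    (Set.encard_le_encard_of_injOn (Set.mapsTo_preimage _ _) (Sym2.map.injective hf).injOn).trans_lt
      hs
  let f' : G.deleteEdges (Sym2.map f ⁻¹' s) →g H.deleteEdges s :=
    { toFun := f
      map_rel' := fun hab ↦ by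
        rw [SimpleGraph.deleteEdges_adj] at hab ⊢
        exact ⟨f.map_adj hab.1, hab.2⟩ }
  exact (h hpre).map f'

theorem pairwise_isEdgeReachable_of_iso_induce {S : Set V} (f : G.induce S ≃g H)
    (hH : H.IsEdgeConnected k) : S.Pairwise (G.IsEdgeReachable k) := by
  intro u hu v hv _
  let φ : H →g G := (SimpleGraph.Embedding.induce S).toHom.comp f.symm.toHom
  have hφ : Injective φ := Subtype.val_injective.comp f.symm.injective
  simpa [φ] using isEdgeReachable_map φ hφ (hH (f ⟨u, hu⟩) (f ⟨v, hv⟩))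

theorem isEdgeReachable_of_pairwise_disjoint_edges {κ : Type*} [Fintype κ] (p : κ → G.Walk u v)
    (hp : Pairwise fun a b ↦ (p a).edges.Disjoint (p b).edges) :
    G.IsEdgeReachable (Fintype.card κ) u v := by
  intro s hs
  by_contra hsep
  have hhit : ∀ a, ∃ e ∈ (p a).edges, e ∈ s := by
    intro a
    by_contra! hmiss
    exact hsep ((p a).toDeleteEdges s hmiss).reachable
  choose e he hes using hhit
  have he_inj : Injective e := fun a b hab ↦ by
    by_contra hne
    exact hp hne (he a) (hab ▸ he b)
  have hcard : (Set.univ : Set κ).encard ≤ s.encard :=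
    Set.encard_le_encard_of_injOn (fun a _ ↦ hes a) he_inj.injOn
  simp only [Set.encard_univ, ENat.card_eq_coe_fintype_card] at hcard
  exact hcard.not_gt hs

end EdgeReachable

section EdgeCut

variable {V : Type*} {G : SimpleGraph V} {k : ℕ}

theorem mem_iff_of_reachable_deleteEdges_edgeCut {T : Set V} {u v : V}
    (h : (G.deleteEdges (edgeCut G T)).Reachable u v) : u ∈ T ↔ v ∈ T := by
  obtain ⟨p⟩ := h
  induction p with
  | nil => rfl
  | @cons a b _ hab _ ih =>
    obtain ⟨hadj, hcut⟩ := SimpleGraph.deleteEdges_adj.mp hab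
    have hstep : a ∈ T ↔ b ∈ T :=
      ⟨fun ha ↦ by_contra fun hb ↦ hcut ⟨hadj, a, b, rfl, ha, hb⟩,
        fun hb ↦ by_contra fun ha ↦ hcut ⟨hadj, b, a, Sym2.eq_swap, hb, ha⟩⟩
    exact hstep.trans ih

theorem subset_of_encard_edgeCut_lt {S T : Set V} (hS : S.Pairwise (G.IsEdgeReachable k))
    (hcut : (edgeCut G T).encard < k) (hST : (S ∩ T).Nonempty) : S ⊆ T := by
  obtain ⟨a, haS, haT⟩ := hST
  intro b hb
  obtain rfl | hab := eq_or_ne a b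
  · exact haT
  · exact (mem_iff_of_reachable_deleteEdges_edgeCut (hS haS hb hab hcut)).mp haT

end EdgeCut

/-- The hypercube graph with one dimension for each element of `ι`, whose vertices are the
functions `ι → Bool`. Adjacency is written as for `cubeGraph`, so that `cubeGraph` is
definitionally the case `ι = Fin 3`. -/
def hypercubeGraph (ι : Type*) : SimpleGraph (ι → Bool) where
  Adj x y := ∃! i, x i ≠ y i
  symm := ⟨fun _ _ h ↦ by simpa only [ne_comm] using h⟩
  loopless := ⟨fun _ h ↦ h.exists.choose_spec rfl⟩

namespace hypercubeGraph

open Function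

variable {ι : Type*} [DecidableEq ι] {x : ι → Bool} {i j k : ι}

/-- The neighbour of the vertex `x` of the hypercube in direction `i`. -/
def flipAt (x : ι → Bool) (i : ι) : ι → Bool :=
  update x i (!x i)

theorem flipAt_apply_ne_self : flipAt x i i ≠ x i := by
  simp [flipAt]

theorem flipAt_apply_of_ne (h : j ≠ i) : flipAt x i j = x j :=
  update_of_ne h _ _

theorem flipAt_comm (x : ι → Bool) (i j : ι) : flipAt (flipAt x i) j = flipAt (flipAt x j) i := by
  obtain rfl | hij := eq_or_ne i j
  · rfl
  · simp only [flipAt, update_of_ne hij, update_of_ne hij.symm, update_comm hij]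

theorem adj_flipAt (x : ι → Bool) (i : ι) : (hypercubeGraph ι).Adj x (flipAt x i) :=
  ⟨i, flipAt_apply_ne_self.symm, fun _ hj ↦ by_contra fun hji ↦ hj (flipAt_apply_of_ne hji).symm⟩

/-- The walk from `x` to `flipAt x i` in directions `j`, `i`, `j`. For `j = i` it traverses the edge
between `x` and `flipAt x i` three times, so that this direction needs no separate treatment. -/
def detour (x : ι → Bool) (i j : ι) : (hypercubeGraph ι).Walk x (flipAt x i) :=
  .cons (adj_flipAt x j) <| .cons (adj_flipAt (flipAt x j) i) <|
    .cons (flipAt_comm x i j ▸ (adj_flipAt (flipAt x i) j).symm) .nil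

theorem mem_edges_detour {e : Sym2 (ι → Bool)} :
    e ∈ (detour x i j).edges ↔ e = s(x, flipAt x j) ∨ e = s(flipAt x j, flipAt (flipAt x j) i) ∨
      e = s(flipAt (flipAt x j) i, flipAt x i) := by
  simp [detour]

theorem exists_mem_apply_ne_of_mem_edges_detour {e : Sym2 (ι → Bool)} (hji : j ≠ i)
    (he : e ∈ (detour x i j).edges) : ∃ w ∈ e, w j ≠ x j := by
  have h_flip : flipAt (flipAt x j) i j ≠ x j := by
    rw [flipAt_apply_of_ne hji]
    exact flipAt_apply_ne_self
  rcases mem_edges_detour.mp he with rfl | rfl | rfl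
  · exact ⟨flipAt x j, Sym2.mem_mk_right _ _, flipAt_apply_ne_self⟩
  · exact ⟨flipAt x j, Sym2.mem_mk_left _ _, flipAt_apply_ne_self⟩
  · exact ⟨flipAt (flipAt x j) i, Sym2.mem_mk_left _ _, h_flip⟩

theorem apply_eq_of_mem_edges_detour {e : Sym2 (ι → Bool)} {w : ι → Bool} (hki : k ≠ i)
    (hkj : k ≠ j) (he : e ∈ (detour x i j).edges) (hw : w ∈ e) : w k = x k := by
  rcases mem_edges_detour.mp he with rfl | rfl | rfl <;>
    rcases Sym2.mem_iff.mp hw with rfl | rfl <;>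
    simp only [flipAt_apply_of_ne hki, flipAt_apply_of_ne hkj]

theorem disjoint_edges_detour (x : ι → Bool) (i : ι) (hjk : j ≠ k) :
    (detour x i j).edges.Disjoint (detour x i k).edges := by
  wlog hji : j ≠ i generalizing j k
  · rw [not_not] at hji
    exact (this hjk.symm (hji ▸ hjk.symm)).symm
  intro e hej hek
  obtain ⟨w, hwe, hwj⟩ := exists_mem_apply_ne_of_mem_edges_detour hji hej
  exact hwj (apply_eq_of_mem_edges_detour hji hjk hek hwe)

variable [Fintype ι]

theorem isEdgeReachable_flipAt (x : ι → Bool) (i : ι) :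
    (hypercubeGraph ι).IsEdgeReachable (Fintype.card ι) x (flipAt x i) :=
  isEdgeReachable_of_pairwise_disjoint_edges (detour x i) fun _ _ ↦ disjoint_edges_detour x i

theorem isEdgeReachable_update (x : ι → Bool) (i : ι) (b : Bool) :
    (hypercubeGraph ι).IsEdgeReachable (Fintype.card ι) x (update x i b) := by
  obtain rfl | hb := eq_or_ne b (x i)
  · rw [update_eq_self]
  · rw [Bool.eq_not.mpr hb]
    exact isEdgeReachable_flipAt x i

end hypercubeGraph

theorem hypercubeGraph_isEdgeConnected {ι : Type*} [Fintype ι] :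
    (hypercubeGraph ι).IsEdgeConnected (Fintype.card ι) := by
  classical
  intro x y
  have hpartial (s : Finset ι) :
      (hypercubeGraph ι).IsEdgeReachable (Fintype.card ι) x (s.piecewise y x) := by
    induction s using Finset.induction_on with
    | empty => rw [Finset.piecewise_empty]
    | insert i s _ ih =>
      rw [Finset.piecewise_insert]
      exact ih.trans (hypercubeGraph.isEdgeReachable_update _ i (y i))
  simpa only [Finset.piecewise_univ] using hpartial Finset.univ

theorem cubeGraph_isEdgeConnected_three : cubeGraph.IsEdgeConnected 3 :=
  hypercubeGraph_isEdgeConnected (ι := Fin 3)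

theorem Q3_low_degree_subgraphs_disjoint_general {V : Type*} {G : SimpleGraph V} {k : ℕ}
    {S T : Finset V} (hS : (S : Set V).Pairwise (G.IsEdgeReachable k)) (hcard : T.card ≤ S.card)
    (hTcut : (edgeCut G (T : Set V)).encard < k) (hne : S ≠ T) : Disjoint S T := by
  by_contra hmeet
  have hinter : ((S : Set V) ∩ T).Nonempty :=
    Set.not_disjoint_iff_nonempty_inter.mp (mt Finset.disjoint_coe.mp hmeet)
  have hsub : S ⊆ T := Finset.coe_subset.mp (subset_of_encard_edgeCut_lt hS hTcut hinter)
  exact hne (Finset.eq_of_subset_of_card_le hsub hcard)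

/-- Any two `Q₃` subgraphs of `G` each with at most 2 edges of `G` leaving them
must be vertex-disjoint. -/
theorem Q3_low_degree_subgraphs_disjoint {V : Type*} [Fintype V] (G : SimpleGraph V)
    (S T : Finset V)
    (hS : Nonempty ((G.induce (S : Set V)) ≃g cubeGraph))
    (hT : Nonempty ((G.induce (T : Set V)) ≃g cubeGraph))
    (hScut : (edgeCut G (S : Set V)).ncard ≤ 2)
    (hTcut : (edgeCut G (T : Set V)).ncard ≤ 2)
    (hne : S ≠ T) :
    Disjoint S T := by
  obtain ⟨f⟩ := hS
  obtain ⟨g⟩ := hT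
  have hcard : T.card = S.card := Finset.card_eq_of_equiv (g.trans f.symm).toEquiv
  have hcut : (edgeCut G (T : Set V)).encard < (3 : ℕ) := by
    rw [← (Set.toFinite _).cast_ncard_eq]
    exact_mod_cast Nat.lt_succ_of_le hTcut
  exact Q3_low_degree_subgraphs_disjoint_general
    (pairwise_isEdgeReachable_of_iso_induce f cubeGraph_isEdgeConnected_three) hcard.le hcut hne
end
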